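/- Existence and uniqueness for the semi-discrete scheme: for every h > 0 there exists a unique bounded continuous function u_h : ℝ^N → ℝ satisfying u_h = T_h u_h on all of ℝ^N. -/

import Mathlib

/-!
`T_h` is the dynamic programming operator of a discounted controlled Markov chain: with probability
`e^{-hλ}` the chain moves from `x` to one of the `2d` points `x + h b ± √h σ_m`, chosen uniformly,
and otherwise it jumps to `x + η(x, v, z)` with `z` distributed as `ν / λ`. The transition law
depends weakly continuously on the state and the control, so averaging along it maps bounded
continuous functions to bounded continuous functions without increasing sup-distances. The infimum
over the compact control space has the same property, and the discount contributes a factor at most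
`e^{-h c₀} < 1`. Hence `T_h` is a contraction of the Banach space of bounded continuous functions.
-/

open MeasureTheory

noncomputable section

abbrev Euc (n : ℕ) : Type := EuclideanSpace ℝ (Fin n)

/-- The semi-discrete scheme operator `T_h` of the semi-Lagrangian scheme. -/
noncomputable def schemeT {N M d : ℕ} {V : Type*}
    (σ : Euc N → V → Fin d → Euc N) (b : Euc N → V → Euc N)
    (c f : Euc N → V → ℝ) (η : Euc N → V → Euc M → Euc N)
    (ν : Measure (Euc M)) (h : ℝ) (w : Euc N → ℝ) (x : Euc N) : ℝ :=
  ⨅ v : V, h * f x v + Real.exp (-(h * c x v)) *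
      ((Real.exp (-(h * (ν Set.univ).toReal)) / (2 * (d : ℝ))) *
        ∑ m : Fin d, (w (x + h • b x v + Real.sqrt h • σ x v m) +
          w (x + h • b x v - Real.sqrt h • σ x v m)) +
       ((1 - Real.exp (-(h * (ν Set.univ).toReal))) / (ν Set.univ).toReal) *
        ∫ z, w (x + η x v z) ∂ν)

open scoped BoundedContinuousFunction NNReal

section DynamicProgramming

lemma abs_ciInf_sub_ciInf_le {ι : Type*} [Nonempty ι] {F G : ι → ℝ} {K : ℝ}
    (hF : BddBelow (Set.range F)) (hG : BddBelow (Set.range G)) (hFG : ∀ i, |F i - G i| ≤ K) :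
    |(⨅ i, F i) - ⨅ i, G i| ≤ K := by
  refine abs_sub_le_iff.2 ⟨?_, ?_⟩
  · refine sub_le_comm.1 (le_ciInf fun i => ?_)
    linarith [ciInf_le hF i, (abs_sub_le_iff.1 (hFG i)).1]
  · refine sub_le_comm.1 (le_ciInf fun i => ?_)
    linarith [ciInf_le hG i, (abs_sub_le_iff.1 (hFG i)).2]

variable {X V Y : Type*} [TopologicalSpace X] [TopologicalSpace V] [TopologicalSpace Y]

lemma bddBelow_range_section (F : X × V →ᵇ ℝ) (x : X) :
    BddBelow (Set.range fun v => F (x, v)) :=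
  F.isBounded_range.bddBelow.mono (Set.range_comp_subset_range (Prod.mk x) F)

lemma continuous_iInf_snd [CompactSpace V] {F : X × V → ℝ} (hF : Continuous F) :
    Continuous fun x => ⨅ v, F (x, v) := by
  simpa only [Set.image_univ, sInf_range] using
    isCompact_univ.continuous_sInf (f := fun x v => F (x, v)) hF

/-- Minimization over a compact control space, as a map on bounded continuous functions. -/
def infSnd [CompactSpace V] [Nonempty V] (F : X × V →ᵇ ℝ) : X →ᵇ ℝ :=
  .ofNormedAddCommGroup (fun x => ⨅ v, F (x, v)) (continuous_iInf_snd F.continuous) ‖F‖ fun x => by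
    simpa using abs_ciInf_sub_ciInf_le (bddBelow_range_section F x)
      (bddBelow_range_section 0 x) fun v => by simpa using F.norm_coe_le_norm (x, v)

lemma lipschitzWith_infSnd [CompactSpace V] [Nonempty V] :
    LipschitzWith 1 (infSnd : (X × V →ᵇ ℝ) → X →ᵇ ℝ) :=
  LipschitzWith.mk_one fun F G => (BoundedContinuousFunction.dist_le dist_nonneg).2 fun x =>
    abs_ciInf_sub_ciInf_le (bddBelow_range_section F x) (bddBelow_range_section G x)
      fun v => F.dist_coe_le_dist (g := G) (x, v)

lemma existsUnique_boundedContinuous_iff {p : (X → ℝ) → Prop} :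
    (∃! u : X → ℝ, (Continuous u ∧ ∃ C, ∀ x, |u x| ≤ C) ∧ p u) ↔ ∃! u : X →ᵇ ℝ, p u := by
  constructor
  · rintro ⟨u, ⟨⟨hu, C, hC⟩, hpu⟩, huniq⟩
    exact ⟨.ofNormedAddCommGroup u hu C hC, hpu, fun w hw =>
      DFunLike.coe_injective (huniq w ⟨⟨w.continuous, ‖w‖, w.norm_coe_le_norm⟩, hw⟩)⟩
  · rintro ⟨u, hpu, huniq⟩
    refine ⟨u, ⟨⟨u.continuous, ‖u‖, u.norm_coe_le_norm⟩, hpu⟩, ?_⟩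
    rintro w ⟨⟨hw, C, hC⟩, hpw⟩
    exact congrArg DFunLike.coe (huniq (.ofNormedAddCommGroup w hw C hC) hpw)

variable [MeasurableSpace X] [OpensMeasurableSpace X]

/-- The transition operator `w ↦ (y ↦ ∫ w dκ_y)` of a weakly continuous family `κ` of laws. -/
def transitionOp {κ : Y → ProbabilityMeasure X} (hκ : Continuous κ) (w : X →ᵇ ℝ) : Y →ᵇ ℝ :=
  .ofNormedAddCommGroup (fun y => ∫ x, w x ∂(κ y : Measure X))
    (ProbabilityMeasure.continuous_iff_forall_continuous_integral.1 hκ w) ‖w‖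
    fun y => w.norm_integral_le_norm (κ y : Measure X)

lemma lipschitzWith_transitionOp {κ : Y → ProbabilityMeasure X} (hκ : Continuous κ) :
    LipschitzWith 1 (transitionOp hκ) :=
  LipschitzWith.mk_one fun w w' => (BoundedContinuousFunction.dist_le dist_nonneg).2 fun y => by
    change dist (∫ x, w x ∂(κ y : Measure X)) (∫ x, w' x ∂(κ y : Measure X)) ≤ dist w w'
    rw [dist_eq_norm, dist_eq_norm, ← integral_sub (w.integrable _) (w'.integrable _)]
    exact (w - w').norm_integral_le_norm (κ y : Measure X)

/-- The dynamic programming operator with running cost `g`, discount factor `β` and controlled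
transition law `κ`. -/
def bellmanOp [CompactSpace V] [Nonempty V] {κ : X × V → ProbabilityMeasure X}
    (hκ : Continuous κ) (g β : X × V →ᵇ ℝ) (w : X →ᵇ ℝ) : X →ᵇ ℝ :=
  infSnd (g + β * transitionOp hκ w)

lemma lipschitzWith_bellmanOp [CompactSpace V] [Nonempty V] {κ : X × V → ProbabilityMeasure X}
    (hκ : Continuous κ) (g β : X × V →ᵇ ℝ) : LipschitzWith ‖β‖₊ (bellmanOp hκ g β) := by
  refine LipschitzWith.of_dist_le_mul fun w w' => ?_
  calc dist (bellmanOp hκ g β w) (bellmanOp hκ g β w')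
      ≤ dist (g + β * transitionOp hκ w) (g + β * transitionOp hκ w') := by
        simpa only [NNReal.coe_one, one_mul] using! lipschitzWith_infSnd.dist_le_mul
          (g + β * transitionOp hκ w) (g + β * transitionOp hκ w')
    _ = ‖β * (transitionOp hκ w - transitionOp hκ w')‖ := by
        rw [dist_add_left, dist_eq_norm, mul_sub]
    _ ≤ ‖β‖ * dist (transitionOp hκ w) (transitionOp hκ w') := by
        rw [dist_eq_norm]
        exact norm_mul_le _ _
    _ ≤ ‖β‖ * dist w w' := by
        gcongr
        simpa using (lipschitzWith_transitionOp hκ).dist_le_mul w w'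

theorem existsUnique_bellman [CompactSpace V] [Nonempty V] {κ : X × V → ProbabilityMeasure X}
    (hκ : Continuous κ) (g β : X × V →ᵇ ℝ) (hβ : ‖β‖ < 1) :
    ∃! u : X →ᵇ ℝ, ∀ x, u x =
      ⨅ v, (g (x, v) + β (x, v) * ∫ y, u y ∂(κ (x, v) : Measure X)) := by
  have hT : ContractingWith ‖β‖₊ (bellmanOp hκ g β) := ⟨hβ, lipschitzWith_bellmanOp hκ g β⟩
  exact ⟨hT.fixedPoint, fun x => (DFunLike.congr_fun hT.fixedPoint_isFixedPt x).symm,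
    fun u hu => hT.fixedPoint_unique (BoundedContinuousFunction.ext fun x => (hu x).symm)⟩

end DynamicProgramming

section TransitionLaws

variable {X Y Ω : Type*} [MeasurableSpace X] [MeasurableSpace Ω]

/-- The law that follows `μ` with probability `θ` and `ν` with probability `1 - θ`. -/
def mixture (θ : unitInterval) (μ ν : ProbabilityMeasure X) : ProbabilityMeasure X :=
  ⟨unitInterval.toNNReal θ • (μ : Measure X) +
    unitInterval.toNNReal (unitInterval.symm θ) • (ν : Measure X), inferInstance⟩

variable {E : Type*} [NormedAddCommGroup E] [NormedSpace ℝ E]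

lemma integral_mixture (θ : unitInterval) {μ ν : ProbabilityMeasure X} {f : X → E}
    (hμ : Integrable f (μ : Measure X)) (hν : Integrable f (ν : Measure X)) :
    ∫ x, f x ∂(mixture θ μ ν : Measure X) =
      (θ : ℝ) • ∫ x, f x ∂(μ : Measure X) + (1 - θ : ℝ) • ∫ x, f x ∂(ν : Measure X) := by
  rw [mixture, ProbabilityMeasure.coe_mk, integral_add_measure hμ.smul_measure_nnreal
    hν.smul_measure_nnreal, integral_smul_nnreal_measure, integral_smul_nnreal_measure]
  rfl

lemma integral_normalize_eq_average [Nonempty Ω] (μ : Measure Ω) [IsFiniteMeasure μ] [NeZero μ]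
    (f : Ω → E) :
    ∫ ω, f ω ∂(FiniteMeasure.normalize ⟨μ, inferInstance⟩ : Measure Ω) = ⨍ ω, f ω ∂μ := by
  let μ' : FiniteMeasure Ω := ⟨μ, inferInstance⟩
  have hμ' : μ' ≠ 0 := fun h0 => NeZero.ne μ (congrArg FiniteMeasure.toMeasure h0)
  exact (μ'.average_eq_integral_normalize hμ' f).symm

variable [TopologicalSpace X] [OpensMeasurableSpace X] [TopologicalSpace Y]

lemma continuous_mixture (θ : unitInterval) {κ₁ κ₂ : Y → ProbabilityMeasure X}
    (h₁ : Continuous κ₁) (h₂ : Continuous κ₂) : Continuous fun y => mixture θ (κ₁ y) (κ₂ y) := by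
  rw [ProbabilityMeasure.continuous_iff_forall_continuous_integral] at h₁ h₂ ⊢
  intro w
  simp only [integral_mixture θ (w.integrable _) (w.integrable _)]
  exact ((h₁ w).const_smul (θ : ℝ)).add ((h₂ w).const_smul (1 - θ : ℝ))

lemma integral_map_boundedContinuous (P : ProbabilityMeasure Ω) {φ : Ω → X} (hφ : Measurable φ)
    (w : X →ᵇ ℝ) :
    ∫ x, w x ∂(P.map hφ.aemeasurable : Measure X) = ∫ ω, w (φ ω) ∂(P : Measure Ω) :=
  integral_map hφ.aemeasurable w.continuous.measurable.aestronglyMeasurable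

lemma continuous_map_randomMap [FirstCountableTopology Y] (P : ProbabilityMeasure Ω)
    {φ : Y → Ω → X} (hφ : ∀ y, Measurable (φ y)) (hφ' : ∀ ω, Continuous fun y => φ y ω) :
    Continuous fun y => P.map (hφ y).aemeasurable := by
  rw [ProbabilityMeasure.continuous_iff_forall_continuous_integral]
  intro w
  simp only [integral_map_boundedContinuous P (hφ _) w]
  exact continuous_of_dominated (bound := fun _ => ‖w‖)
    (fun y => (w.continuous.measurable.comp (hφ y)).aestronglyMeasurable)
    (fun y => .of_forall fun ω => w.norm_coe_le_norm _) (integrable_const _)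
    (.of_forall fun ω => w.continuous.comp (hφ' ω))

end TransitionLaws

section Scheme

variable {N M d : ℕ} {V : Type*}

/-- One diffusive move of the scheme from the state-control pair `p`; the noise `ω` selects a
column of `σ` and a sign, `true` standing for `+`. -/
def diffusionStep (σ : Euc N → V → Fin d → Euc N) (b : Euc N → V → Euc N) (h : ℝ)
    (p : Euc N × V) (ω : Fin d × Bool) : Euc N :=
  p.1 + h • b p.1 p.2 + (bif ω.2 then √h else -√h) • σ p.1 p.2 ω.1

lemma continuous_diffusionStep [TopologicalSpace V] {σ : Euc N → V → Fin d → Euc N}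
    {b : Euc N → V → Euc N} (hσ : ∀ m, Continuous fun p : Euc N × V => σ p.1 p.2 m)
    (hb : Continuous fun p : Euc N × V => b p.1 p.2) (h : ℝ) (ω : Fin d × Bool) :
    Continuous fun p => diffusionStep σ b h p ω :=
  (continuous_fst.add (hb.const_smul h)).add ((hσ ω.1).const_smul (bif ω.2 then √h else -√h))

lemma average_diffusionStep (σ : Euc N → V → Fin d → Euc N) (b : Euc N → V → Euc N) (h : ℝ)
    (w : Euc N → ℝ) (x : Euc N) (v : V) :
    ⨍ ω, w (diffusionStep σ b h (x, v) ω) ∂Measure.count =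
      (2 * (d : ℝ))⁻¹ * ∑ m : Fin d, (w (x + h • b x v + √h • σ x v m) +
        w (x + h • b x v - √h • σ x v m)) := by
  rw [average_eq, integral_count, Fintype.sum_prod_type]
  simp [diffusionStep, sub_eq_add_neg, mul_comm]

/-- The probability `e^{-hλ}`, with `λ = ν(E)`, that the scheme makes no jump in one time step. -/
def noJumpProb (ν : Measure (Euc M)) {h : ℝ} (hh : 0 ≤ h) : unitInterval :=
  ⟨Real.exp (-(h * (ν Set.univ).toReal)), (Real.exp_pos _).le,
    Real.exp_le_one_iff.2 (neg_nonpos.2 (mul_nonneg hh ENNReal.toReal_nonneg))⟩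

/-- The law of the state after one time step of length `h` from the state-control pair `p`. -/
def schemeLaw [NeZero d] (σ : Euc N → V → Fin d → Euc N) (b : Euc N → V → Euc N)
    {η : Euc N → V → Euc M → Euc N} (hη : ∀ x v, Measurable (η x v))
    (ν : Measure (Euc M)) [IsFiniteMeasure ν] {h : ℝ} (hh : 0 ≤ h) (p : Euc N × V) :
    ProbabilityMeasure (Euc N) :=
  mixture (noJumpProb ν hh)
    ((FiniteMeasure.normalize ⟨Measure.count, inferInstance⟩).map
      (measurable_of_finite (diffusionStep σ b h p)).aemeasurable)
    ((FiniteMeasure.normalize ⟨ν, inferInstance⟩).map ((hη p.1 p.2).const_add p.1).aemeasurable)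

lemma continuous_schemeLaw [NeZero d] [TopologicalSpace V] [FirstCountableTopology V]
    {σ : Euc N → V → Fin d → Euc N} {b : Euc N → V → Euc N} {η : Euc N → V → Euc M → Euc N}
    (hσ : ∀ m, Continuous fun p : Euc N × V => σ p.1 p.2 m)
    (hb : Continuous fun p : Euc N × V => b p.1 p.2)
    (hηxv : ∀ z, Continuous fun p : Euc N × V => η p.1 p.2 z)
    (hηz : ∀ x v, Measurable (η x v)) (ν : Measure (Euc M)) [IsFiniteMeasure ν]
    {h : ℝ} (hh : 0 ≤ h) : Continuous (schemeLaw σ b hηz ν hh) :=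
  continuous_mixture _
    (continuous_map_randomMap _ (fun _ => measurable_of_finite _)
      (continuous_diffusionStep hσ hb h))
    (continuous_map_randomMap _ (fun p : Euc N × V => (hηz p.1 p.2).const_add p.1)
      fun z => continuous_fst.add (hηxv z))

lemma integral_schemeLaw [NeZero d] (σ : Euc N → V → Fin d → Euc N) (b : Euc N → V → Euc N)
    {η : Euc N → V → Euc M → Euc N} (hη : ∀ x v, Measurable (η x v))
    (ν : Measure (Euc M)) [IsFiniteMeasure ν] [NeZero ν] {h : ℝ} (hh : 0 ≤ h)
    (w : Euc N →ᵇ ℝ) (p : Euc N × V) :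
    ∫ y, w y ∂(schemeLaw σ b hη ν hh p : Measure (Euc N)) =
      noJumpProb ν hh * (⨍ ω, w (diffusionStep σ b h p ω) ∂Measure.count) +
        (1 - noJumpProb ν hh) * ⨍ z, w (p.1 + η p.1 p.2 z) ∂ν := by
  rw [schemeLaw, integral_mixture _ (w.integrable _) (w.integrable _),
    integral_map_boundedContinuous _ (measurable_of_finite _),
    integral_map_boundedContinuous _ ((hη p.1 p.2).const_add p.1),
    integral_normalize_eq_average, integral_normalize_eq_average, smul_eq_mul, smul_eq_mul]

lemma schemeT_eq_iInf_integral [NeZero d] (σ : Euc N → V → Fin d → Euc N) (b : Euc N → V → Euc N)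
    (c f : Euc N → V → ℝ) {η : Euc N → V → Euc M → Euc N} (hη : ∀ x v, Measurable (η x v))
    (ν : Measure (Euc M)) [IsFiniteMeasure ν] [NeZero ν] {h : ℝ} (hh : 0 ≤ h)
    (w : Euc N →ᵇ ℝ) (x : Euc N) :
    schemeT σ b c f η ν h w x =
      ⨅ v, (h * f x v + Real.exp (-(h * c x v)) *
        ∫ y, w y ∂(schemeLaw σ b hη ν hh (x, v) : Measure (Euc N))) := by
  simp only [integral_schemeLaw, average_diffusionStep, average_eq _ (fun z => w (_ + η _ _ z)),
    schemeT, noJumpProb, Measure.real, smul_eq_mul, div_eq_mul_inv, mul_assoc]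

theorem schemeT_exists_unique_general [TopologicalSpace V] [FirstCountableTopology V]
    [CompactSpace V] [Nonempty V] (hd : 0 < d)
    (σ : Euc N → V → Fin d → Euc N) (b : Euc N → V → Euc N)
    (c f : Euc N → V → ℝ) (η : Euc N → V → Euc M → Euc N)
    (hσ : ∀ m : Fin d, Continuous fun p : Euc N × V => σ p.1 p.2 m)
    (hb : Continuous fun p : Euc N × V => b p.1 p.2)
    (hc : Continuous fun p : Euc N × V => c p.1 p.2)
    (hf : Continuous fun p : Euc N × V => f p.1 p.2)
    (hηxv : ∀ z, Continuous fun p : Euc N × V => η p.1 p.2 z)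
    (hηz : ∀ x v, Measurable (η x v))
    (L : ℝ) (hfbd : ∀ x v, |f x v| ≤ L)
    (ν : Measure (Euc M)) [IsFiniteMeasure ν] (hlam : 0 < (ν Set.univ).toReal)
    (c₀ : ℝ) (hc₀ : 0 < c₀) (hcbd : ∀ x v, c₀ ≤ c x v) (h : ℝ) (hh : 0 < h) :
    ∃! u : Euc N → ℝ,
      (Continuous u ∧ ∃ C, ∀ x, |u x| ≤ C) ∧
        ∀ x, u x = schemeT σ b c f η ν h u x := by
  have : NeZero d := ⟨hd.ne'⟩
  have : NeZero ν := ⟨by rintro rfl; simp at hlam⟩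
  let g : Euc N × V →ᵇ ℝ := .ofNormedAddCommGroup (fun p => h * f p.1 p.2) (hf.const_mul h) (h * L)
    fun p => by
      rw [norm_mul, Real.norm_of_nonneg hh.le]
      exact mul_le_mul_of_nonneg_left (hfbd p.1 p.2) hh.le
  have hdiscount (p : Euc N × V) : ‖Real.exp (-(h * c p.1 p.2))‖ ≤ Real.exp (-(h * c₀)) := by
    rw [Real.norm_of_nonneg (Real.exp_pos _).le]
    gcongr
    exact hcbd p.1 p.2
  let β : Euc N × V →ᵇ ℝ := .ofNormedAddCommGroup (fun p => Real.exp (-(h * c p.1 p.2)))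
    (Real.continuous_exp.comp (hc.const_mul h).neg) _ hdiscount
  have hβ : ‖β‖ < 1 := calc
    ‖β‖ ≤ Real.exp (-(h * c₀)) :=
      BoundedContinuousFunction.norm_ofNormedAddCommGroup_le _ (Real.exp_pos _).le hdiscount
    _ < 1 := Real.exp_lt_one_iff.2 (neg_lt_zero.2 (mul_pos hh hc₀))
  rw [existsUnique_boundedContinuous_iff]
  simp only [schemeT_eq_iInf_integral σ b c f hηz ν hh.le]
  exact existsUnique_bellman (continuous_schemeLaw hσ hb hηxv hηz ν hh.le) g β hβ

end Scheme

/-- Existence and uniqueness for the semi-discrete scheme: for every `h > 0` there is a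
unique bounded continuous function `u` with `u = T_h u` on all of `ℝ^N`. -/
theorem schemeT_exists_unique
    (N M d : ℕ) (hN : 0 < N) (hM : 0 < M) (hd : 0 < d)
    (V : Type*) [MetricSpace V] [CompactSpace V] [Nonempty V]
    (σ : Euc N → V → Fin d → Euc N) (b : Euc N → V → Euc N)
    (c f : Euc N → V → ℝ) (η : Euc N → V → Euc M → Euc N)
    (hσ : ∀ m : Fin d, Continuous fun p : Euc N × V => σ p.1 p.2 m)
    (hb : Continuous fun p : Euc N × V => b p.1 p.2)
    (hc : Continuous fun p : Euc N × V => c p.1 p.2)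
    (hf : Continuous fun p : Euc N × V => f p.1 p.2)
    (hηxv : ∀ z, Continuous fun p : Euc N × V => η p.1 p.2 z)
    (hηz : ∀ x v, Measurable (η x v))
    (L₁ L₂ ℓ : ℝ) (hL₁ : 0 ≤ L₁) (hL₂ : 0 ≤ L₂) (hℓ : 0 ≤ ℓ)
    (hfbd : ∀ x v, |f x v| ≤ L₁)
    (hflip : ∀ v, LipschitzWith (Real.toNNReal L₁) fun x => f x v)
    (hcb : ∀ x v, |c x v| ≤ L₁)
    (hclip : ∀ v, LipschitzWith (Real.toNNReal L₁) fun x => c x v)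
    (hbb : ∀ x v, ‖b x v‖ ≤ L₂)
    (hblip : ∀ v, LipschitzWith (Real.toNNReal L₂) fun x => b x v)
    (hσb : ∀ x v (m : Fin d), ‖σ x v m‖ ≤ L₂)
    (hσlip : ∀ v (m : Fin d), LipschitzWith (Real.toNNReal L₂) fun x => σ x v m)
    (hηb : ∀ x v (z : Euc M),
      ‖η x v z‖ ≤ L₂ * (if ‖z‖ < 1 then ‖z‖ else Real.exp (ℓ * ‖z‖)))
    (hηlip : ∀ v (z : Euc M),
      LipschitzWith (Real.toNNReal (L₂ * (if ‖z‖ < 1 then ‖z‖ else Real.exp (ℓ * ‖z‖))))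
        fun x => η x v z)
    (ν : Measure (Euc M)) [IsFiniteMeasure ν] (hν0 : ν {0} = 0)
    (hlam : 0 < (ν Set.univ).toReal)
    (hνexp : Integrable (fun z : Euc M => Real.exp (ℓ * ‖z‖)) ν)
    (c₀ : ℝ) (hc₀ : 0 < c₀) (hcbd : ∀ x v, c₀ ≤ c x v)
    (h : ℝ) (hh : 0 < h) :
    ∃! u : Euc N → ℝ,
      (Continuous u ∧ ∃ C, ∀ x, |u x| ≤ C) ∧
        ∀ x, u x = schemeT σ b c f η ν h u x :=
  schemeT_exists_unique_general hd σ b c f η hσ hb hc hf hηxv hηz L₁ hfbd ν hlam c₀ hc₀ hcbd h hh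

end
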